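/- arXiv:1102.0264 — 12 statements merged into one kernel-verified Lean document; each statement's English description precedes it below -/
import Mathlib

section
/- Let M be a measurement cover on a finite set of measurements X with finite outcome set O, and let e = (e_C)_{C∈M} be a compatible (no-signalling) probabilistic empirical model over M. Then e has a global section over the semiring ℝ of all reals: there exists d : O^X → ℝ with Σ_{t : X→O} d(t) = 1 such that for every C ∈ M and every section s over C, Σ_{t : X→O, t|C = s} d(t) = e_C(s). -/
open Finset

/-- Restriction of a section over `U` to a subset `V ⊆ U`. -/
def resSec {X O : Type} {U V : Finset X} (h : V ⊆ U) (s : {x // x ∈ U} → O) :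
    {x // x ∈ V} → O :=
  fun v => s ⟨v.1, h v.2⟩

/-- Restriction of a global assignment `t : X → O` to the context `C`. -/
def resGlob {X O : Type} (t : X → O) (C : Finset X) : {x // x ∈ C} → O :=
  fun c => t c.1

/-- Marginal of an `R`-valued distribution on sections over `U` to `V ⊆ U`:
`(d|V)(s) = ∑_{s' restricting to s} d(s')`. -/
def marg {X O R : Type} [DecidableEq X] [Fintype O] [DecidableEq O]
    [AddCommMonoid R] {U V : Finset X} (h : V ⊆ U)
    (d : ({x // x ∈ U} → O) → R) : ({x // x ∈ V} → O) → R :=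
  fun s => ∑ s' ∈ univ.filter (fun s' => resSec h s' = s), d s'

/-- Marginal of a distribution on global assignments to the context `C`. -/
def globMarg {X O R : Type} [Fintype X] [DecidableEq X] [Fintype O] [DecidableEq O]
    [AddCommMonoid R] (d : (X → O) → R) (C : Finset X) : ({x // x ∈ C} → O) → R :=
  fun s => ∑ t ∈ univ.filter (fun t => resGlob t C = s), d t

lemma aux_sum_globMarg {X O : Type} [Fintype X] [DecidableEq X] [Fintype O] [DecidableEq O]
    (d : (X → O) → ℝ) (C : Finset X) : ∑ s, globMarg d C s = ∑ t, d t := by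
  unfold globMarg
  exact Finset.sum_fiberwise univ (fun t => resGlob t C) d

lemma aux_marg_globMarg {X O : Type} [Fintype X] [DecidableEq X] [Fintype O] [DecidableEq O]
    (d : (X → O) → ℝ) {C V : Finset X} (h : V ⊆ C) :
    marg h (globMarg d C) = globMarg d V := by
  funext s
  unfold marg globMarg
  simp only [Finset.sum_filter]
  have : ∀ s' : {x // x ∈ C} → O,
      (if resSec h s' = s then ∑ t, (if resGlob t C = s' then d t else 0) else 0)
      = ∑ t, if resGlob t C = s' then (if resGlob t V = s then d t else 0) else 0 := by
    intro s'
    split_ifs with h1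
    · refine Finset.sum_congr rfl fun t _ => ?_
      split_ifs with h2 h3
      · rfl
      · exact absurd (by rw [← h1, ← h2]; rfl) h3
      · rfl
    · symm
      refine Finset.sum_eq_zero fun t _ => ?_
      split_ifs with h2 h3
      · exact absurd (by rw [← h3, ← h2]; rfl) h1
      · rfl
      · rfl
  rw [Finset.sum_congr rfl fun s' _ => this s', Finset.sum_comm]
  simp

/-- extension of a section by a base assignment -/
def extSec {X O : Type} [DecidableEq X] (t0 : X → O) (C : Finset X) (s : {x // x ∈ C} → O) :
    X → O := fun x => if h : x ∈ C then s ⟨x, h⟩ else t0 x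

/-- push-forward along the extension -/
def liftD {X O : Type} [Fintype X] [DecidableEq X] [Fintype O] [DecidableEq O]
    (t0 : X → O) (C : Finset X) (f : ({x // x ∈ C} → O) → ℝ) : (X → O) → ℝ :=
  fun t => ∑ s, if extSec t0 C s = t then f s else 0

lemma aux_sum_lift {X O : Type} [Fintype X] [DecidableEq X] [Fintype O] [DecidableEq O]
    (t0 : X → O) (C : Finset X) (f : ({x // x ∈ C} → O) → ℝ) :
    ∑ t, liftD t0 C f t = ∑ s, f s := by
  unfold liftD
  rw [Finset.sum_comm]
  simp

lemma aux_globMarg_lift {X O : Type} [Fintype X] [DecidableEq X] [Fintype O] [DecidableEq O]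
    (t0 : X → O) (C : Finset X) (f : ({x // x ∈ C} → O) → ℝ) (C' : Finset X)
    (s' : {x // x ∈ C'} → O) :
    globMarg (liftD t0 C f) C' s' = ∑ s, if resGlob (extSec t0 C s) C' = s' then f s else 0 := by
  unfold globMarg liftD
  rw [Finset.sum_comm]
  refine Finset.sum_congr rfl fun s _ => ?_
  rw [Finset.sum_ite_eq]
  simp

lemma aux_globMarg_lift_self {X O : Type} [Fintype X] [DecidableEq X] [Fintype O] [DecidableEq O]
    (t0 : X → O) (C : Finset X) (f : ({x // x ∈ C} → O) → ℝ) (s' : {x // x ∈ C} → O) :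
    globMarg (liftD t0 C f) C s' = f s' := by
  rw [aux_globMarg_lift]
  have : ∀ s, resGlob (extSec t0 C s) C = s := by
    intro s
    funext x
    simp [resGlob, extSec]
  simp [this]

lemma aux_globMarg_lift_zero {X O : Type} [Fintype X] [DecidableEq X] [Fintype O] [DecidableEq O]
    (t0 : X → O) (C : Finset X) (f : ({x // x ∈ C} → O) → ℝ) (C' : Finset X)
    (hf : ∀ r, marg (show C ∩ C' ⊆ C from inter_subset_left) f r = 0)
    (s' : {x // x ∈ C'} → O) :
    globMarg (liftD t0 C f) C' s' = 0 := by
  rw [aux_globMarg_lift]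
  by_cases hB : ∀ x : {x // x ∈ C'}, x.1 ∉ C → s' x = t0 x.1
  · have h := hf (resSec (show C ∩ C' ⊆ C' from inter_subset_right) s')
    unfold marg at h
    rw [Finset.sum_filter] at h
    refine Eq.trans ?_ h
    refine Finset.sum_congr rfl fun s _ => ?_
    refine if_congr ?_ rfl rfl
    constructor
    · intro hs
      rw [← hs]
      funext x
      have hx := (Finset.mem_inter.1 x.2).1
      simp [resSec, resGlob, extSec, hx]
    · intro hs
      funext x
      by_cases hx : x.1 ∈ C
      · have := congrFun hs ⟨x.1, Finset.mem_inter.2 ⟨hx, x.2⟩⟩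
        simpa [resSec, resGlob, extSec, hx] using this
      · simp [resGlob, extSec, hx, hB x hx]
  · refine Finset.sum_eq_zero fun s _ => if_neg fun hs => hB fun x hx => ?_
    rw [← hs]
    simp [resGlob, extSec, hx]

/-- Every compatible (no-signalling) probabilistic empirical model over a
measurement cover has a global section over the semiring `ℝ` of all reals: a real-valued
distribution on global assignments marginalizing to each `e_C`. -/
theorem empirical_model_has_real_global_section
    {X O : Type} [Fintype X] [DecidableEq X] [Fintype O] [DecidableEq O]
    (MM : Finset (Finset X))
    (hcov : ∀ x : X, ∃ C ∈ MM, x ∈ C)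
    (hanti : ∀ C ∈ MM, ∀ C' ∈ MM, C ⊆ C' → C = C')
    (e : (C : Finset X) → ({x // x ∈ C} → O) → NNReal)
    (hdist : ∀ C ∈ MM, ∑ s, e C s = 1)
    (hcompat : ∀ C ∈ MM, ∀ C' ∈ MM,
      marg (show C ∩ C' ⊆ C from inter_subset_left) (e C) =
      marg (show C ∩ C' ⊆ C' from inter_subset_right) (e C')) :
    ∃ d : (X → O) → ℝ, (∑ t, d t = 1) ∧
      ∀ C ∈ MM, ∀ s : {x // x ∈ C} → O, globMarg d C s = (e C s : ℝ) := by
  have hne : Nonempty (X → O) := by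
    rcases isEmpty_or_nonempty X with hX | ⟨⟨x⟩⟩
    · exact ⟨fun x => (hX.false x).elim⟩
    · obtain ⟨C, hC, hx⟩ := hcov x
      by_contra hO
      have hO' : IsEmpty ({x // x ∈ C} → O) :=
        ⟨fun s => hO ⟨fun _ => s ⟨x, hx⟩⟩⟩
      have := hdist C hC
      simp at this
  obtain ⟨t0⟩ := hne
  have key : ∀ S : Finset (Finset X), S ⊆ MM → ∃ d : (X → O) → ℝ, (∑ t, d t = 1) ∧
      ∀ C ∈ S, ∀ s : {x // x ∈ C} → O, globMarg d C s = (e C s : ℝ) := by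
    intro S
    induction S using Finset.induction_on with
    | empty => exact fun _ => ⟨Pi.single t0 1, by simp, by simp⟩
    | insert C S hCS ih =>
      intro hS
      obtain ⟨d, hd1, hd⟩ := ih fun D hD => hS (Finset.mem_insert_of_mem hD)
      have hC : C ∈ MM := hS (Finset.mem_insert_self _ _)
      set f : ({x // x ∈ C} → O) → ℝ := fun s => (e C s : ℝ) - globMarg d C s with hfdef
      have hadd : ∀ (D : Finset X) s, globMarg (fun t => d t + liftD t0 C f t) D s
          = globMarg d D s + globMarg (liftD t0 C f) D s := by
        intro D s
        simp only [globMarg, Finset.sum_add_distrib]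
      refine ⟨fun t => d t + liftD t0 C f t, ?_, ?_⟩
      · rw [Finset.sum_add_distrib, aux_sum_lift, hd1, hfdef, Finset.sum_sub_distrib,
          aux_sum_globMarg, hd1, ← NNReal.coe_sum, hdist C hC]
        simp
      · intro D hD s
        rw [hadd]
        rcases Finset.mem_insert.1 hD with rfl | hDS
        · rw [aux_globMarg_lift_self, hfdef]
          ring
        · rw [aux_globMarg_lift_zero, hd D hDS s, add_zero]
          intro r
          have h1 : marg (show C ∩ D ⊆ C from inter_subset_left) f r
              = ((marg (show C ∩ D ⊆ C from inter_subset_left) (e C) r : NNReal) : ℝ)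
                - marg (show C ∩ D ⊆ C from inter_subset_left) (globMarg d C) r := by
            simp only [marg, hfdef, Finset.sum_sub_distrib, NNReal.coe_sum]
          have h2 : globMarg d D = fun s => (e D s : ℝ) := funext (hd D hDS)
          rw [h1, hcompat C hC D (hS hD), aux_marg_globMarg,
            ← aux_marg_globMarg d (show C ∩ D ⊆ D from inter_subset_right), h2]
          simp only [marg, NNReal.coe_sum, sub_self]
  exact key MM (Finset.Subset.refl _)
end

section
/- Let M be the incidence matrix of a measurement cover M on a finite set X with finite outcome set O, and let V be a vector of nonnegative reals indexed by the pairs (C, s) with C ∈ M and s a section over C. If the linear system M X = V has a solution with entries in ℝ≥0, then the system M X = V_b has a solution over the boolean semiring B = ({0,1}, ∨, 0, ∧, 1), where M is read as a boolean matrix and V_b is obtained from V by replacing each nonzero entry by 1. -/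
open Finset

/-- If the linear system `M X = V` given by the incidence matrix of a
measurement cover has a solution with entries in the nonnegative reals, then the boolean system
`M X = V_b` has a solution over the boolean semiring `({0,1}, ∨, ∧)`, where `V_b` replaces each
nonzero entry of `V` by `1`.  (The row equation at `(C, s)` over the booleans reads: the
supremum of the entries `X_t` over the global assignments `t` with `t|C = s` equals the
`(C,s)`-entry of `V_b`.) -/
theorem boolean_solution_of_nonneg_solution
    {X O : Type} [Fintype X] [DecidableEq X] [Fintype O] [DecidableEq O]
    (MM : Finset (Finset X))
    (hcov : ∀ x : X, ∃ C ∈ MM, x ∈ C)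
    (hanti : ∀ C ∈ MM, ∀ C' ∈ MM, C ⊆ C' → C = C')
    (V : (C : Finset X) → ({x // x ∈ C} → O) → ℝ)
    (hV : ∀ C ∈ MM, ∀ s, 0 ≤ V C s)
    (x : (X → O) → ℝ) (hx : ∀ t, 0 ≤ x t)
    (hsol : ∀ C ∈ MM, ∀ s : {x // x ∈ C} → O,
      ∑ t ∈ univ.filter (fun t => resGlob t C = s), x t = V C s) :
    ∃ xb : (X → O) → Bool,
      ∀ C ∈ MM, ∀ s : {x // x ∈ C} → O,
        (univ.filter (fun t => resGlob t C = s)).sup xb = decide (V C s ≠ 0) := by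
  refine ⟨fun t => decide (x t ≠ 0), fun C hC s => ?_⟩
  rw [← hsol C hC s]
  by_cases h : ∀ t ∈ univ.filter (fun t => resGlob t C = s), x t = 0
  · rw [Finset.sum_eq_zero h]
    have : (univ.filter (fun t => resGlob t C = s)).sup (fun t => decide (x t ≠ 0)) = ⊥ := by
      rw [Finset.sup_eq_bot_iff]
      intro t ht
      simp [h t ht]
    rw [this]
    simp
  · have hne : ∑ t ∈ univ.filter (fun t => resGlob t C = s), x t ≠ 0 := fun h0 =>
      h ((Finset.sum_eq_zero_iff_of_nonneg (fun t _ => hx t)).1 h0)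
    rw [decide_eq_true hne]
    push Not at h
    obtain ⟨t, ht, hxt⟩ := h
    have h1 := Finset.le_sup (f := fun t => decide (x t ≠ 0)) ht
    simp only [decide_eq_true hxt] at h1
    exact top_le_iff.1 h1
end

section
/- Let O = {1, ..., l}, let M be a measurement cover on a finite set X, and let e, e' be two compatible probabilistic models over M. For a partial context U (a subset of X contained in some C ∈ M), write e_U for the marginal e_C|U for any C ∈ M with U ⊆ C (this is independent of the choice of C by compatibility). If e_U(s) = e'_U(s) for every partial context U and every section s : U → O with s(m) ≠ 1 for all m ∈ U, then e_C = e'_C for every C ∈ M. -/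
open Finset

lemma sum_agree_split {ι : Type} [Fintype ι] [DecidableEq ι] {l : ℕ} [NeZero l]
    (d : (ι → Fin l) → NNReal) (W : Finset ι) (t : ι → Fin l) (i : ι) (hi : i ∈ W)
    (hti : t i = 0) :
    ∑ s ∈ univ.filter (fun s : ι → Fin l => ∀ j ∈ W.erase i, s j = t j), d s =
    ∑ s ∈ univ.filter (fun s : ι → Fin l => ∀ j ∈ W, s j = t j), d s +
    ∑ o ∈ univ.erase (0 : Fin l), ∑ s ∈ univ.filter
      (fun s : ι → Fin l => ∀ j ∈ W, s j = Function.update t i o j), d s := by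
  have key : ∀ o : Fin l, (univ.filter
      (fun s : ι → Fin l => ∀ j ∈ W, s j = Function.update t i o j)) =
      (univ.filter (fun s : ι → Fin l => ∀ j ∈ W.erase i, s j = t j)).filter
        (fun s => s i = o) := by
    intro o
    ext s
    simp only [mem_filter, mem_univ, true_and, mem_erase]
    constructor
    · intro h
      refine ⟨fun j hj => ?_, ?_⟩
      · rw [h j hj.2, Function.update_of_ne hj.1]
      · rw [h i hi, Function.update_self]
    · rintro ⟨h, h'⟩ j hj
      by_cases hji : j = i
      · subst hji; rw [h', Function.update_self]
      · rw [h j ⟨hji, hj⟩, Function.update_of_ne hji]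
  have h1 := Finset.sum_fiberwise
    (univ.filter (fun s : ι → Fin l => ∀ j ∈ W.erase i, s j = t j)) (fun s => s i) d
  rw [← h1, ← Finset.add_sum_erase _ _ (mem_univ (0 : Fin l))]
  simp only [← key]
  rw [← hti, Function.update_eq_self]

lemma agree_of_avoiding {ι : Type} [Fintype ι] [DecidableEq ι] {l : ℕ} [NeZero l]
    (d d' : (ι → Fin l) → NNReal)
    (h : ∀ (W : Finset ι) (t : ι → Fin l), (∀ j ∈ W, t j ≠ 0) →
      ∑ s ∈ univ.filter (fun s : ι → Fin l => ∀ j ∈ W, s j = t j), d s =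
      ∑ s ∈ univ.filter (fun s : ι → Fin l => ∀ j ∈ W, s j = t j), d' s) :
    ∀ (n : ℕ) (W : Finset ι) (t : ι → Fin l), (W.filter (fun j => t j = 0)).card = n →
      ∑ s ∈ univ.filter (fun s : ι → Fin l => ∀ j ∈ W, s j = t j), d s =
      ∑ s ∈ univ.filter (fun s : ι → Fin l => ∀ j ∈ W, s j = t j), d' s := by
  intro n
  induction n with
  | zero =>
    intro W t hn
    apply h
    intro j hj h0
    rw [card_eq_zero] at hn
    have : j ∈ W.filter (fun j => t j = 0) := by simp [hj, h0]
    rw [hn] at this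
    simp at this
  | succ n ih =>
    intro W t hn
    obtain ⟨i, hi⟩ : (W.filter (fun j => t j = 0)).Nonempty := by
      rw [← card_pos]; omega
    have hi' := mem_filter.1 hi
    have hc : ((W.filter (fun j => t j = 0)).erase i).card = n := by
      rw [card_erase_of_mem hi]; omega
    have e1 := sum_agree_split d W t i hi'.1 hi'.2
    have e2 := sum_agree_split d' W t i hi'.1 hi'.2
    have e3 := ih (W.erase i) t (by rw [← hc]; congr 1; ext j; simp; tauto)
    rw [e1, e2, Finset.sum_congr rfl (fun o ho => ih W (Function.update t i o) ?_)] at e3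
    · exact add_right_cancel e3
    · rw [← hc]; congr 1; ext j
      have := (mem_erase.1 ho).1
      by_cases hji : j = i
      · subst hji; simp [this]
      · simp [hji]

/-- A compatible probabilistic model over a measurement cover is determined by
its marginal values `e_U(s)` on partial contexts `U` at sections `s` avoiding the distinguished
outcome (here outcomes are `Fin l`, with `0 : Fin l` playing the role of the outcome `1` of
`O = {1,…,l}`).  If two compatible models agree on all such values, they coincide. -/
theorem model_determined_by_outcome_avoiding_marginals
    {X : Type} [Fintype X] [DecidableEq X] {l : ℕ} [NeZero l]
    (MM : Finset (Finset X))
    (hcov : ∀ x : X, ∃ C ∈ MM, x ∈ C)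
    (hanti : ∀ C ∈ MM, ∀ C' ∈ MM, C ⊆ C' → C = C')
    (e e' : (C : Finset X) → ({x // x ∈ C} → Fin l) → NNReal)
    (hdist : ∀ C ∈ MM, ∑ s, e C s = 1)
    (hdist' : ∀ C ∈ MM, ∑ s, e' C s = 1)
    (hcompat : ∀ C ∈ MM, ∀ C' ∈ MM,
      marg (show C ∩ C' ⊆ C from inter_subset_left) (e C) =
      marg (show C ∩ C' ⊆ C' from inter_subset_right) (e C'))
    (hcompat' : ∀ C ∈ MM, ∀ C' ∈ MM,
      marg (show C ∩ C' ⊆ C from inter_subset_left) (e' C) =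
      marg (show C ∩ C' ⊆ C' from inter_subset_right) (e' C'))
    (h0 : ∀ C ∈ MM, ∀ U : Finset X, ∀ h : U ⊆ C, ∀ s : {x // x ∈ U} → Fin l,
      (∀ m, s m ≠ 0) → marg h (e C) s = marg h (e' C) s) :
    ∀ C ∈ MM, e C = e' C := by
  intro C hC
  have key := agree_of_avoiding (e C) (e' C) (by
    intro W t ht
    have hU : W.map (Function.Embedding.subtype _) ⊆ C := by
      intro x hx
      obtain ⟨y, _, rfl⟩ := mem_map.1 hx
      exact y.2
    have := h0 C hC _ hU (resSec hU t) (by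
      rintro ⟨m, hm⟩
      obtain ⟨y, hy, rfl⟩ := mem_map.1 hm
      exact ht y hy)
    have hf : (univ.filter (fun s : {x // x ∈ C} → Fin l => resSec hU s = resSec hU t)) =
        univ.filter (fun s => ∀ j ∈ W, s j = t j) := by
      ext s
      simp only [mem_filter, mem_univ, true_and]
      constructor
      · intro h j hj
        exact congrFun h ⟨j.1, mem_map.2 ⟨j, hj, rfl⟩⟩
      · intro h
        funext ⟨m, hm⟩
        obtain ⟨y, hy, rfl⟩ := mem_map.1 hm
        exact h y hy
    simpa only [marg, hf] using this)
  funext t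
  have := key _ univ t rfl
  have hf : (univ.filter (fun s : {x // x ∈ C} → Fin l => ∀ j ∈ univ, s j = t j)) = {t} := by
    ext s
    simp [funext_iff]
  rw [hf, sum_singleton, sum_singleton] at this
  exact this
end

section
/- Let O = {1,...,l}, M a measurement cover on a finite set X, 𝒰 the set of partial contexts (subsets of X contained in some C ∈ M), and D := Σ_{U∈𝒰} (l−1)^{|U|}. Identify each compatible probabilistic model e over M with the vector in ℝ^t (t := Σ_{C∈M} l^{|C|}) whose (C,s)-entry is e_C(s). Then the linear subspace of ℝ^t spanned by the vectors arising from compatible probabilistic models has dimension at most D. -/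
open Finset

section helpers

variable {X : Type} [Fintype X] [DecidableEq X] {l : ℕ}

/-- vector space -/
abbrev VV (l : ℕ) (MM : Finset (Finset X)) :=
  ((C : {C : Finset X // C ∈ MM}) × ({x // x ∈ C.1} → Fin l)) → ℝ

/-- agreement of a section with a global assignment on `U` -/
def Agr {C : Finset X} (U : Finset X) (t : X → Fin l) (s : {x // x ∈ C} → Fin l) : Prop :=
  ∀ c : {x // x ∈ C}, c.1 ∈ U → s c = t c.1

open Classical in
/-- marginal functional -/
noncomputable def mm (MM : Finset (Finset X)) (C : {C : Finset X // C ∈ MM}) (U : Finset X)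
    (t : X → Fin l) : VV l MM →ₗ[ℝ] ℝ where
  toFun v := ∑ s : {x // x ∈ C.1} → Fin l, if Agr U t s then v ⟨C, s⟩ else 0
  map_add' v w := by
    rw [← Finset.sum_add_distrib]
    refine Finset.sum_congr rfl fun s _ => ?_
    split_ifs <;> simp
  map_smul' a v := by
    simp [Finset.mul_sum]

open Classical in
theorem mm_apply (MM : Finset (Finset X)) (C : {C : Finset X // C ∈ MM}) (U : Finset X)
    (t : X → Fin l) (v : VV l MM) :
    mm MM C U t v = ∑ s : {x // x ∈ C.1} → Fin l, if Agr U t s then v ⟨C, s⟩ else 0 := rfl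

theorem mm_congr (MM : Finset (Finset X)) (C : {C : Finset X // C ∈ MM}) (U : Finset X)
    (t t' : X → Fin l) (h : ∀ x ∈ U, t x = t' x) (v : VV l MM) :
    mm MM C U t v = mm MM C U t' v := by
  classical
  rw [mm_apply, mm_apply]
  refine Finset.sum_congr rfl fun s _ => ?_
  have : Agr U t s ↔ Agr U t' s := by
    unfold Agr
    refine forall_congr' fun c => forall_congr' fun hc => ?_
    rw [h _ hc]
  simp [this]

theorem mm_erase (MM : Finset (Finset X)) (C : {C : Finset X // C ∈ MM}) (U : Finset X)
    (t : X → Fin l) (v : VV l MM) (x : X) (hx : x ∈ U) (hxC : x ∈ C.1) :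
    mm MM C (U.erase x) t v = ∑ a, mm MM C U (Function.update t x a) v := by
  classical
  simp only [mm_apply]
  rw [Finset.sum_comm]
  refine Finset.sum_congr rfl fun s _ => ?_
  have : ∀ a, Agr U (Function.update t x a) s ↔ (a = s ⟨x, hxC⟩ ∧ Agr (U.erase x) t s) := by
    intro a
    constructor
    · intro h
      refine ⟨?_, ?_⟩
      · have := h ⟨x, hxC⟩ hx
        simpa using this.symm
      · intro c hc
        have := h c (Finset.mem_of_mem_erase hc)
        rwa [Function.update_of_ne (Finset.ne_of_mem_erase hc)] at this
    · rintro ⟨rfl, h⟩ c hc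
      by_cases hcx : c.1 = x
      · subst hcx
        simp
      · rw [Function.update_of_ne hcx]
        exact h c (Finset.mem_erase.2 ⟨hcx, hc⟩)
  simp only [this, ite_and]
  simp

theorem mm_self (MM : Finset (Finset X)) (C : {C : Finset X // C ∈ MM})
    (t : X → Fin l) (s : {x // x ∈ C.1} → Fin l) (h : ∀ c, t c.1 = s c) (v : VV l MM) :
    mm MM C C.1 t v = v ⟨C, s⟩ := by
  classical
  rw [mm_apply]
  have : ∀ s' : {x // x ∈ C.1} → Fin l, Agr C.1 t s' ↔ s' = s := by
    intro s'
    constructor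
    · intro h'
      funext c
      rw [h' c c.2, h]
    · rintro rfl c _
      exact (h c).symm
  simp [this]

/-- compatible vectors -/
noncomputable def WW (l : ℕ) (MM : Finset (Finset X)) : Submodule ℝ (VV l MM) where
  carrier := {v | ∀ (C C' : {C : Finset X // C ∈ MM}) (U : Finset X) (t : X → Fin l),
    U ⊆ C.1 → U ⊆ C'.1 → mm MM C U t v = mm MM C' U t v}
  add_mem' := by
    intro a b ha hb C C' U t h h'
    rw [map_add, map_add, ha C C' U t h h', hb C C' U t h h']
  zero_mem' := by
    intro C C' U t h h'
    simp
  smul_mem' := by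
    intro c a ha C C' U t h h'
    rw [map_smul, map_smul, ha C C' U t h h']

theorem mm_marg (MM : Finset (Finset X)) (C : {C : Finset X // C ∈ MM}) (V U : Finset X)
    (hV : V ⊆ C.1) (hU : U ⊆ V) (t : X → Fin l)
    (e : (C : Finset X) → ({x // x ∈ C} → Fin l) → NNReal) :
    mm MM C U t (fun p => (e p.1.1 p.2 : ℝ)) =
      haveI := Classical.decPred (fun r : {x // x ∈ V} → Fin l => Agr U t r)
      ∑ r : {x // x ∈ V} → Fin l, if Agr U t r then ((marg hV (e C.1) r : NNReal) : ℝ) else 0 := by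
  classical
  rw [mm_apply]
  have h1 : ∀ s : {x // x ∈ C.1} → Fin l, Agr U t s ↔ Agr U t (resSec hV s) := by
    intro s
    constructor
    · intro h c hc
      exact h ⟨c.1, hV c.2⟩ hc
    · intro h c hc
      exact h ⟨c.1, hU hc⟩ hc
  rw [← Finset.sum_fiberwise (s := univ) (g := fun s : {x // x ∈ C.1} → Fin l => resSec hV s)]
  refine Finset.sum_congr rfl fun r _ => ?_
  unfold marg
  have : ∀ s ∈ univ.filter (fun s : {x // x ∈ C.1} → Fin l => resSec hV s = r),
      (if Agr U t s then ((e C.1 s : NNReal) : ℝ) else 0) =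
      if Agr U t r then ((e C.1 s : NNReal) : ℝ) else 0 := by
    intro s hs
    have := (Finset.mem_filter.1 hs).2
    simp only [h1 s, this]
  rw [Finset.sum_congr rfl this]
  split_ifs <;> simp

theorem mm_zero {n : ℕ} (MM : Finset (Finset X)) (v : VV (n+1) MM)
    (h0 : ∀ (C : {C : Finset X // C ∈ MM}) (U : Finset X) (t : X → Fin (n+1)), U ⊆ C.1 →
      (∀ x ∈ U, t x ≠ 0) → mm MM C U t v = 0) (C : {C : Finset X // C ∈ MM}) :
    ∀ (k : ℕ) (U : Finset X) (t : X → Fin (n+1)), U ⊆ C.1 →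
      (U.filter (fun x => t x = 0)).card = k → mm MM C U t v = 0 := by
  intro k
  induction k with
  | zero =>
    intro U t hU hk
    refine h0 C U t hU fun x hx h => ?_
    rw [Finset.card_eq_zero, Finset.filter_eq_empty_iff] at hk
    exact hk hx h
  | succ k ih =>
    intro U t hU hk
    obtain ⟨x, hx⟩ : (U.filter (fun x => t x = 0)).Nonempty := by
      rw [← Finset.card_pos]; omega
    obtain ⟨hxU, hx0⟩ := Finset.mem_filter.1 hx
    have hc : ((U.filter (fun x => t x = 0)).erase x).card = k := by
      rw [Finset.card_erase_of_mem hx]; omega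
    have key := mm_erase MM C U t v x hxU (hU hxU)
    rw [ih (U.erase x) t ((Finset.erase_subset _ _).trans hU)
      (by rw [← Finset.filter_erase] at hc; exact hc)] at key
    rw [Finset.sum_eq_single (0 : Fin (n+1))] at key
    · rw [key]
      congr 2
      rw [← hx0]; simp
    · intro a _ ha
      refine ih _ _ hU ?_
      rw [← hc]
      congr 1
      ext y
      by_cases hy : y = x
      · subst hy; simp [ha]
      · simp [hy]
    · simp

end helpers

/-- The linear subspace of `ℝ^t` (vectors indexed by pairs `(C, s)` of a
context `C ∈ M` and a section `s` over `C`) spanned by the vectors arising from compatible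
probabilistic models over the measurement cover `M` has dimension at most
`D = ∑_{U ∈ 𝒰} (l-1)^{|U|}`, where `𝒰` is the set of partial contexts. -/
theorem no_signalling_span_dimension_le
    {X : Type} [Fintype X] [DecidableEq X] {l : ℕ} (hl : 1 ≤ l)
    (MM : Finset (Finset X))
    (hcov : ∀ x : X, ∃ C ∈ MM, x ∈ C)
    (hanti : ∀ C ∈ MM, ∀ C' ∈ MM, C ⊆ C' → C = C') :
    Module.finrank ℝ ↥(Submodule.span ℝ
      { v : ((C : {C : Finset X // C ∈ MM}) × ({x // x ∈ C.1} → Fin l)) → ℝ |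
        ∃ e : (C : Finset X) → ({x // x ∈ C} → Fin l) → NNReal,
          (∀ C ∈ MM, ∑ s, e C s = 1) ∧
          (∀ C ∈ MM, ∀ C' ∈ MM,
            marg (show C ∩ C' ⊆ C from inter_subset_left) (e C) =
            marg (show C ∩ C' ⊆ C' from inter_subset_right) (e C')) ∧
          v = fun p => (e p.1.1 p.2 : ℝ) })
      ≤ ∑ U ∈ univ.filter (fun U : Finset X => ∃ C ∈ MM, U ⊆ C), (l - 1) ^ U.card := by
  classical
  obtain ⟨n, rfl⟩ : ∃ n, l = n + 1 := ⟨l - 1, by omega⟩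
  set 𝒰 := univ.filter (fun U : Finset X => ∃ C ∈ MM, U ⊆ C) with h𝒰
  have hch : ∀ U : {U // U ∈ 𝒰}, ∃ C : {C : Finset X // C ∈ MM}, U.1 ⊆ C.1 := by
    intro U
    obtain ⟨C, hC, h⟩ := (Finset.mem_filter.1 U.2).2
    exact ⟨⟨C, hC⟩, h⟩
  choose ch hch using hch
  let ext : (U : Finset X) → ({x // x ∈ U} → Fin n) → X → Fin (n+1) :=
    fun U r x => if h : x ∈ U then Fin.succ (r ⟨x, h⟩) else 0
  let Φ : VV (n+1) MM →ₗ[ℝ] (((U : {U // U ∈ 𝒰}) × ({x // x ∈ U.1} → Fin n)) → ℝ) :=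
    LinearMap.pi fun p => mm MM (ch p.1) p.1.1 (ext p.1.1 p.2)
  have hinj : Function.Injective (Φ.domRestrict (WW (n+1) MM)) := by
    rw [← LinearMap.ker_eq_bot, LinearMap.ker_eq_bot']
    rintro ⟨v, hv⟩ h
    have h0 : ∀ (C : {C : Finset X // C ∈ MM}) (U : Finset X) (t : X → Fin (n+1)), U ⊆ C.1 →
      (∀ x ∈ U, t x ≠ 0) → mm MM C U t v = 0 := by
      intro C U t hU ht
      have hU' : U ∈ 𝒰 := Finset.mem_filter.2 ⟨Finset.mem_univ _, C.1, C.2, hU⟩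
      have h1 := congrFun h ⟨⟨U, hU'⟩, fun x => (t x.1).pred (ht x.1 x.2)⟩
      have h2 : mm MM (ch ⟨U, hU'⟩) U (ext U fun x => (t x.1).pred (ht x.1 x.2)) v = 0 := h1
      rw [hv C (ch ⟨U, hU'⟩) U t hU (hch ⟨U, hU'⟩), ← h2]
      refine mm_congr _ _ _ _ _ ?_ _
      intro x hx
      simp [ext, hx]
    ext ⟨C, s⟩
    have := mm_zero MM v h0 C _ C.1 (fun x => if h : x ∈ C.1 then s ⟨x, h⟩ else 0)
      subset_rfl rfl
    rw [mm_self MM C _ s (by intro c; simp)] at this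
    simpa using this
  have hW := LinearMap.finrank_le_finrank_of_injective hinj
  refine (Submodule.finrank_mono (t := WW (n+1) MM) ?_).trans (hW.trans ?_)
  · rw [Submodule.span_le]
    rintro v ⟨e, -, he, rfl⟩ C C' U t hU hU'
    rw [mm_marg MM C (C.1 ∩ C'.1) U inter_subset_left (Finset.subset_inter hU hU') t e,
      mm_marg MM C' (C.1 ∩ C'.1) U inter_subset_right (Finset.subset_inter hU hU') t e,
      he C.1 C.2 C'.1 C'.2]
  · rw [Module.finrank_fintype_fun_eq_card, Fintype.card_sigma]
    simp only [Fintype.card_fun, Fintype.card_fin, Fintype.card_coe]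
    rw [Finset.sum_coe_sort 𝒰 (fun U => n ^ U.card)]
    simp
end

section
/- Let O = {1,...,l}, M a measurement cover on a finite set X, and 𝒰 the set of partial contexts. For each U ∈ 𝒰 and each section s : U → O with s(m) ≠ 1 for all m ∈ U, define the global assignment v_{U,s} : X → O by v_{U,s}(m) = s(m) for m ∈ U and v_{U,s}(m) = 1 for m ∉ U, and let 𝐯_{U,s} ∈ ℝ^t be the vector whose (C, s')-entry is 1 if v_{U,s}|C = s' and 0 otherwise. Then the family of vectors {𝐯_{U,s} : U ∈ 𝒰, s : U → O with s(m) ≠ 1 for all m ∈ U}, which has Σ_{U∈𝒰}(l−1)^{|U|} members, is linearly independent in ℝ^t. -/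
open Finset

/-- For each partial context `U` and each section `s` over `U` avoiding the
distinguished outcome (`0 : Fin l`, playing the role of the outcome `1` of `O = {1,…,l}`),
extend to the global assignment `v_{U,s}` taking the distinguished outcome outside `U`; the
associated 0/1-vectors `𝐯_{U,s}` in `ℝ^t` (indexed by pairs `(C, s')`, entry 1 iff
`v_{U,s}|C = s'`) form a family of `∑_{U ∈ 𝒰} (l-1)^{|U|}` linearly independent vectors. -/
theorem extended_assignment_vectors_linearly_independent
    {X : Type} [Fintype X] [DecidableEq X] {l : ℕ} [NeZero l]
    (MM : Finset (Finset X))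
    (hcov : ∀ x : X, ∃ C ∈ MM, x ∈ C)
    (hanti : ∀ C ∈ MM, ∀ C' ∈ MM, C ⊆ C' → C = C') :
    Fintype.card {p : (U : Finset X) × ({x // x ∈ U} → Fin l) //
        (∃ C ∈ MM, p.1 ⊆ C) ∧ ∀ m, p.2 m ≠ 0}
      = (∑ U ∈ univ.filter (fun U : Finset X => ∃ C ∈ MM, U ⊆ C), (l - 1) ^ U.card) ∧
    LinearIndependent ℝ
      (fun p : {p : (U : Finset X) × ({x // x ∈ U} → Fin l) //
          (∃ C ∈ MM, p.1 ⊆ C) ∧ ∀ m, p.2 m ≠ 0} =>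
        fun q : (C : {C : Finset X // C ∈ MM}) × ({x // x ∈ C.1} → Fin l) =>
          if resGlob (fun m => if h : m ∈ p.1.1 then p.1.2 ⟨m, h⟩ else 0) q.1.1 = q.2
          then (1 : ℝ) else 0) := by
  constructor
  · have e : {p : (U : Finset X) × ({x // x ∈ U} → Fin l) //
        (∃ C ∈ MM, p.1 ⊆ C) ∧ ∀ m, p.2 m ≠ 0} ≃
        ((U : {U : Finset X // ∃ C ∈ MM, U ⊆ C}) × ({x // x ∈ U.1} → {y : Fin l // y ≠ 0})) :=
      { toFun := fun p => ⟨⟨p.1.1, p.2.1⟩, fun m => ⟨p.1.2 m, p.2.2 m⟩⟩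
        invFun := fun q => ⟨⟨q.1.1, fun m => (q.2 m).1⟩, q.1.2, fun m => (q.2 m).2⟩
        left_inv := fun _ => rfl
        right_inv := fun _ => rfl }
    rw [Fintype.card_congr e, Fintype.card_sigma]
    have h1 : Fintype.card {y : Fin l // y ≠ 0} = l - 1 := by
      simp [Fintype.card_subtype_compl]
    simp only [Fintype.card_fun, h1, Fintype.card_coe]
    rw [← Finset.sum_subtype (p := fun U : Finset X => ∃ C ∈ MM, U ⊆ C)
      (univ.filter (fun U : Finset X => ∃ C ∈ MM, U ⊆ C)) (by simp)
      (fun U => (l - 1) ^ U.card)]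
  · rw [Fintype.linearIndependent_iff]
    intro g hg
    have key : ∀ n : ℕ, ∀ p, Fintype.card X - p.1.1.card = n → g p = 0 := by
      intro n
      induction n using Nat.strong_induction_on with
      | _ n ih =>
      rintro ⟨⟨U, s⟩, ⟨C, hC, hUC⟩, hs⟩ hn
      have h0 : ∑ s' ∈ univ.filter (fun s' : {x // x ∈ C} → Fin l => resSec hUC s' = s),
          (∑ p, g p • (fun q : (C : {C : Finset X // C ∈ MM}) × ({x // x ∈ C.1} → Fin l) =>
          if resGlob (fun m => if h : m ∈ p.1.1 then p.1.2 ⟨m, h⟩ else 0) q.1.1 = q.2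
          then (1 : ℝ) else 0)) ⟨⟨C, hC⟩, s'⟩ = 0 := by
        rw [hg]; simp
      simp only [Finset.sum_apply, Pi.smul_apply, smul_eq_mul, mul_ite, mul_one, mul_zero] at h0
      rw [Finset.sum_comm] at h0
      simp only [Finset.sum_ite_eq, Finset.mem_filter, Finset.mem_univ, true_and] at h0
      rw [Finset.sum_eq_single ⟨⟨U, s⟩, ⟨C, hC, hUC⟩, hs⟩] at h0
      · rw [if_pos] at h0
        · exact h0
        · funext m
          simp [resSec, resGlob]
      · rintro ⟨⟨U', s'⟩, hU', hs'⟩ - hne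
        split_ifs with h
        · have hv : ∀ m (hm : m ∈ U), ∃ h : m ∈ U', s' ⟨m, h⟩ = s ⟨m, hm⟩ := by
            intro m hm
            have := congrFun h ⟨m, hm⟩
            simp only [resSec, resGlob] at this
            split_ifs at this with h'
            · exact ⟨h', this⟩
            · exact absurd this.symm (hs _)
          have hsub : U ⊆ U' := fun m hm => (hv m hm).1
          have hss : U ≠ U' := by
            rintro rfl
            apply hne
            have : s' = s := funext fun ⟨m, hm⟩ => (hv m hm).2
            subst this
            rfl
          have hlt := Finset.card_lt_card (hsub.ssubset_of_ne hss)
          have hle := Finset.card_le_univ U'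
          refine ih (Fintype.card X - U'.card) ?_ _ rfl
          simp only at hn
          omega
        · rfl
      · intro h; exact absurd (Finset.mem_univ _) h
    exact fun p => key _ p rfl
end

section
/- Let M be a measurement cover on a finite set X with outcome set O = {1,...,l}, and let M be its incidence matrix. Then the rank of M as a matrix over the reals equals D := Σ_{U∈𝒰} (l−1)^{|U|}, where 𝒰 is the set of partial contexts of M. -/
open Finset

def bfun {X : Type} {n : ℕ} [Fintype X] [DecidableEq X] (Z : Finset X) (r : X → Fin (n+1)) :
    (X → Fin (n+1)) → ℝ :=
  fun t => if (∀ x ∈ Z, t x = 0) ∧ (∀ x, r x ≠ 0 → t x = r x) then 1 else 0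

def rsupp {X : Type} {n : ℕ} [Fintype X] (r : X → Fin (n+1)) : Finset X :=
  univ.filter (fun x => r x ≠ 0)

theorem bfun_indep {X : Type} {n : ℕ} [Fintype X] [DecidableEq X] :
    LinearIndependent ℝ (fun r : X → Fin (n+1) => bfun ∅ r) := by
  rw [Fintype.linearIndependent_iff]
  intro c hc
  have key : ∀ k : ℕ, ∀ r : X → Fin (n+1), (rsupp r).card = k → c r = 0 := by
    intro k
    induction k using Nat.strong_induction_on with
    | _ k ih =>
      intro r hr
      have h := congrFun hc r
      simp only [Finset.sum_apply, Pi.smul_apply, smul_eq_mul, Pi.zero_apply] at h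
      rw [Finset.sum_eq_single r] at h
      · simpa [bfun] using h
      · intro b _ hb
        by_cases hle : ∀ x, b x ≠ 0 → r x = b x
        · have hlt : rsupp b ⊂ rsupp r := by
            refine ⟨?_, ?_⟩
            · intro x hx
              simp only [rsupp, mem_filter, mem_univ, true_and] at hx ⊢
              rw [hle x hx]; exact hx
            · intro hsub
              apply hb
              funext x
              by_cases hx : b x = 0
              · by_contra hne
                have : x ∈ rsupp r := by
                  simp only [rsupp, mem_filter, mem_univ, true_and]
                  intro h0; exact hne (hx.trans h0.symm)
                have := hsub this
                simp only [rsupp, mem_filter, mem_univ, true_and] at this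
                exact this hx
              · exact (hle x hx).symm
          rw [ih _ (hr ▸ Finset.card_lt_card hlt) b rfl, zero_mul]
        · have : bfun ∅ b r = 0 := by
            unfold bfun
            rw [if_neg]
            rintro ⟨_, h2⟩; exact hle h2
          rw [this, mul_zero]
      · intro h; exact absurd (mem_univ _) h
  exact fun r => key _ r rfl

theorem bfun_rec {X : Type} {n : ℕ} [Fintype X] [DecidableEq X] (Z : Finset X) (x : X)
    (r : X → Fin (n+1)) (hr : r x = 0) :
    bfun (insert x Z) r = bfun Z r - ∑ o ∈ univ.erase (0 : Fin (n+1)),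
      bfun Z (Function.update r x o) := by
  funext t
  simp only [Pi.sub_apply, Finset.sum_apply]
  have hu : ∀ o : Fin (n+1), o ≠ 0 → bfun Z (Function.update r x o) t
      = if t x = o then bfun Z r t else 0 := by
    intro o ho
    have : (∀ y, Function.update r x o y ≠ 0 → t y = Function.update r x o y) ↔
        (t x = o ∧ ∀ y, r y ≠ 0 → t y = r y) := by
      constructor
      · intro h
        refine ⟨by simpa using h x (by simpa using ho), ?_⟩
        intro y hy
        have hyx : y ≠ x := by rintro rfl; exact hy hr
        simpa [hyx] using h y (by simpa [hyx] using hy)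
      · rintro ⟨h1, h2⟩ y hy
        by_cases hyx : y = x
        · subst hyx; simpa using h1
        · simp only [Function.update_of_ne hyx] at hy ⊢
          exact h2 y hy
    unfold bfun
    simp only [this]
    by_cases h1 : t x = o <;> simp [h1]
  rw [Finset.sum_congr rfl (fun o ho => hu o (Finset.ne_of_mem_erase ho))]
  rw [Finset.sum_ite_eq]
  by_cases h0 : t x = 0
  · simp [bfun, h0]
  · simp [bfun, h0]

theorem bfun_mem {X : Type} {n : ℕ} [Fintype X] [DecidableEq X] (C : Finset X)
    (S : Submodule ℝ ((X → Fin (n+1)) → ℝ))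
    (hS : ∀ r, rsupp r ⊆ C → bfun ∅ r ∈ S) (Z : Finset X) :
    Z ⊆ C → ∀ r, rsupp r ⊆ C → Disjoint Z (rsupp r) → bfun Z r ∈ S := by
  induction Z using Finset.induction_on with
  | empty => intro _ r hr _; exact hS r hr
  | insert x Z hx ih =>
    intro hZ r hr hd
    rw [Finset.disjoint_insert_left] at hd
    have hrx : r x = 0 := by
      by_contra h; exact hd.1 (by simp [rsupp, h])
    have hZ' : Z ⊆ C := (Finset.subset_insert _ _).trans hZ
    rw [bfun_rec Z x r hrx]
    refine S.sub_mem (ih hZ' r hr hd.2) (S.sum_mem fun o ho => ih hZ' _ ?_ ?_)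
    · intro y hy
      by_cases hyx : y = x
      · subst hyx; exact hZ (Finset.mem_insert_self _ _)
      · apply hr
        simpa [rsupp, hyx] using hy
    · rw [Finset.disjoint_left]
      intro y hy hy'
      have hyx : y ≠ x := by rintro rfl; exact hx hy
      refine (Finset.disjoint_left.mp hd.2 hy) ?_
      simpa [rsupp, hyx] using hy'

theorem card_rsupp {X : Type} {n : ℕ} [Fintype X] [DecidableEq X] (U : Finset X) :
    (univ.filter (fun r : X → Fin (n+1) => rsupp r = U)).card = n ^ U.card := by
  have : univ.filter (fun r : X → Fin (n+1) => rsupp r = U)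
      = Fintype.piFinset (fun x => if x ∈ U then univ.erase (0 : Fin (n+1)) else {0}) := by
    ext r
    simp only [mem_filter, mem_univ, true_and, Fintype.mem_piFinset, Finset.ext_iff, rsupp]
    refine forall_congr' fun x => ?_
    by_cases hx : x ∈ U <;> simp [hx]
  rw [this, Fintype.card_piFinset]
  have h2 : ∀ x : X, (if x ∈ U then univ.erase (0 : Fin (n+1)) else {0}).card
      = if x ∈ U then n else 1 := by
    intro x; by_cases hx : x ∈ U <;> simp [hx]
  simp only [h2]
  simp

/-- The rank over the reals of the incidence matrix of a measurement cover
(rows indexed by pairs `(C, s)` of a context and a section over it, columns by global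
assignments, entry 1 iff `t|C = s`) equals `D = ∑_{U ∈ 𝒰} (l-1)^{|U|}`, where `𝒰` is the set
of partial contexts. -/
theorem incidence_matrix_rank
    {X : Type} [Fintype X] [DecidableEq X] {l : ℕ} (hl : 1 ≤ l)
    (MM : Finset (Finset X))
    (hcov : ∀ x : X, ∃ C ∈ MM, x ∈ C)
    (hanti : ∀ C ∈ MM, ∀ C' ∈ MM, C ⊆ C' → C = C') :
    (Matrix.of fun (p : (C : {C : Finset X // C ∈ MM}) × ({x // x ∈ C.1} → Fin l))
        (t : X → Fin l) => if resGlob t p.1.1 = p.2 then (1 : ℝ) else 0).rank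
      = ∑ U ∈ univ.filter (fun U : Finset X => ∃ C ∈ MM, U ⊆ C), (l - 1) ^ U.card := by
  obtain ⟨n, rfl⟩ : ∃ n, l = n + 1 := ⟨l - 1, by omega⟩
  rw [Matrix.rank_eq_finrank_span_row]
  let I := {r : X → Fin (n+1) // ∃ C ∈ MM, rsupp r ⊆ C}
  have hspan : Submodule.span ℝ (Set.range (Matrix.of fun
      (p : (C : {C : Finset X // C ∈ MM}) × ({x // x ∈ C.1} → Fin (n+1)))
        (t : X → Fin (n+1)) => if resGlob t p.1.1 = p.2 then (1 : ℝ) else 0).row)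
      = Submodule.span ℝ (Set.range (fun r : I => bfun ∅ r.1)) := by
    apply le_antisymm
    · rw [Submodule.span_le]
      rintro _ ⟨⟨⟨C, hC⟩, s⟩, rfl⟩
      let r : X → Fin (n+1) := fun x => if h : x ∈ C then s ⟨x, h⟩ else 0
      have hr : rsupp r ⊆ C := by
        intro x hx
        by_contra h
        simp [rsupp, r, h] at hx
      have hm := bfun_mem C (Submodule.span ℝ (Set.range (fun r : I => bfun ∅ r.1)))
        (fun r hr => Submodule.subset_span ⟨⟨r, C, hC, hr⟩, rfl⟩) (C \ rsupp r)
        Finset.sdiff_subset r hr Finset.sdiff_disjoint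
      rw [SetLike.mem_coe]
      convert hm using 1
      funext t
      simp only [Matrix.row, Matrix.of_apply, bfun]
      congr 1
      apply propext
      constructor
      · rintro rfl
        constructor
        · intro x hx
          simp only [rsupp, mem_sdiff, mem_filter, mem_univ, true_and, not_not] at hx
          have := hx.2
          simpa [r, hx.1, resGlob] using this
        · intro x hx
          have hxC : x ∈ C := hr (by simp [rsupp, hx])
          simp [r, hxC, resGlob]
      · rintro ⟨h1, h2⟩
        funext ⟨x, hx⟩
        have hrx : r x = s ⟨x, hx⟩ := by simp [r, hx]
        change t x = _
        rw [← hrx]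
        by_cases h0 : r x = 0
        · rw [h0]; exact h1 x (by simp [rsupp, hx, h0])
        · exact h2 x h0
    · rw [Submodule.span_le]
      rintro _ ⟨⟨r, C, hC, hr⟩, rfl⟩
      have : bfun ∅ r = ∑ s ∈ univ.filter (fun s : {x // x ∈ C} → Fin (n+1) =>
          ∀ x : {x // x ∈ C}, r x.1 ≠ 0 → s x = r x.1), (Matrix.of fun
          (p : (C : {C : Finset X // C ∈ MM}) × ({x // x ∈ C.1} → Fin (n+1)))
          (t : X → Fin (n+1)) => if resGlob t p.1.1 = p.2 then (1 : ℝ) else 0).row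
            ⟨⟨C, hC⟩, s⟩ := by
        funext t
        rw [Finset.sum_apply]
        simp only [Matrix.row, Matrix.of_apply]
        rw [Finset.sum_ite_eq]
        simp only [bfun]
        congr 1
        apply propext
        simp only [notMem_empty, false_imp_iff, implies_true, true_and, mem_filter, mem_univ,
          resGlob]
        constructor
        · intro h x hx; exact h x.1 hx
        · intro h x hx; exact h ⟨x, hr (by simp [rsupp, hx])⟩ hx
      change bfun ∅ r ∈ _
      rw [this]
      exact Submodule.sum_mem _ fun s _ => Submodule.subset_span ⟨_, rfl⟩
  rw [hspan]
  have hli : LinearIndependent ℝ (fun r : I => bfun ∅ r.1) :=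
    bfun_indep.comp (fun r : I => r.1) Subtype.val_injective
  rw [finrank_span_eq_card hli, Fintype.card_subtype,
    Finset.card_eq_sum_card_fiberwise (f := rsupp)
      (t := univ.filter (fun U : Finset X => ∃ C ∈ MM, U ⊆ C))]
  · refine Finset.sum_congr rfl fun U hU => ?_
    rw [Nat.add_sub_cancel, ← card_rsupp U, Finset.filter_filter]
    congr 1
    ext r
    simp only [mem_filter, mem_univ, true_and] at hU ⊢
    constructor
    · exact fun h => h.2
    · rintro rfl; exact ⟨hU, rfl⟩
  · intro r hr
    simpa using hr
end

section
/- Consider the measurement set X = {a, a', b, b'} with outcome set O = {0,1} and the four contexts {a,b}, {a',b}, {a,b'}, {a',b'}. Let the Bell model assign to each context the following probabilities on joint outcomes (in the order (0,0),(1,0),(0,1),(1,1)): context {a,b}: 1/2, 0, 0, 1/2; context {a',b}: 3/8, 1/8, 1/8, 3/8; context {a,b'}: 3/8, 1/8, 1/8, 3/8; context {a',b'}: 1/8, 3/8, 3/8, 1/8. Then there is no probability distribution d on the set of global assignments {a,a',b,b'} → {0,1} (i.e. d : O^X → ℝ≥0 with Σ d = 1) such that for each context C, the marginal of d on C equals the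 given distribution. -/
open Finset

/-- The probability table of the Bell model.  Alice's measurements are `a = 0`, `a' = 1` and
Bob's are `b = 0`, `b' = 1` (indices `i j : Fin 2`); outcomes `0, 1` are `false, true`. -/
noncomputable def bellTable (i j : Fin 2) (x y : Bool) : ℝ :=
  if i = 0 ∧ j = 0 then (if x = y then 1/2 else 0)
  else if i = 1 ∧ j = 1 then (if x = y then 1/8 else 3/8)
  else (if x = y then 3/8 else 1/8)

/-- The Bell model has no global section: there is no probability
distribution `d` on the global assignments (pairs of functions giving Alice's and Bob's
outcomes for each of their two measurements) whose marginal at each context `(i, j)` and joint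
outcome `(x, y)` equals the Bell table entry. -/
theorem bell_model_has_no_global_section :
    ¬ ∃ d : (Fin 2 → Bool) × (Fin 2 → Bool) → ℝ,
      (∀ g, 0 ≤ d g) ∧ (∑ g, d g = 1) ∧
      ∀ i j : Fin 2, ∀ x y : Bool,
        (∑ g ∈ univ.filter
            (fun g : (Fin 2 → Bool) × (Fin 2 → Bool) => g.1 i = x ∧ g.2 j = y), d g)
          = bellTable i j x y := by
  rintro ⟨d, h0, h1, hm⟩
  have key : ∑ g, d g ≤
      (∑ g ∈ univ.filter
        (fun g : (Fin 2 → Bool) × (Fin 2 → Bool) => g.1 0 = true ∧ g.2 0 = false), d g) +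
      (∑ g ∈ univ.filter
        (fun g : (Fin 2 → Bool) × (Fin 2 → Bool) => g.1 0 = false ∧ g.2 0 = true), d g) +
      (∑ g ∈ univ.filter
        (fun g : (Fin 2 → Bool) × (Fin 2 → Bool) => g.1 1 = true ∧ g.2 0 = false), d g) +
      (∑ g ∈ univ.filter
        (fun g : (Fin 2 → Bool) × (Fin 2 → Bool) => g.1 1 = false ∧ g.2 0 = true), d g) +
      (∑ g ∈ univ.filter
        (fun g : (Fin 2 → Bool) × (Fin 2 → Bool) => g.1 0 = true ∧ g.2 1 = false), d g) +
      (∑ g ∈ univ.filter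
        (fun g : (Fin 2 → Bool) × (Fin 2 → Bool) => g.1 0 = false ∧ g.2 1 = true), d g) +
      (∑ g ∈ univ.filter
        (fun g : (Fin 2 → Bool) × (Fin 2 → Bool) => g.1 1 = true ∧ g.2 1 = true), d g) +
      (∑ g ∈ univ.filter
        (fun g : (Fin 2 → Bool) × (Fin 2 → Bool) => g.1 1 = false ∧ g.2 1 = false), d g) := by
    simp only [Finset.sum_filter, ← Finset.sum_add_distrib]
    apply Finset.sum_le_sum
    intro g _
    have hg := h0 g
    cases g.1 0 <;> cases g.1 1 <;> cases g.2 0 <;> cases g.2 1 <;> simp <;> linarith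
  simp only [hm] at key
  rw [h1] at key
  norm_num [bellTable] at key
end

section
/- Consider the measurement set X = {a, a', b, b'} with outcome set O = {0,1} and the four contexts {a,b}, {a',b}, {a,b'}, {a',b'}. Define the Hardy supports: S_{{a,b}} = all four sections over {a,b}; S_{{a',b}} = all sections over {a',b} except the one sending both to 0; S_{{a,b'}} = all sections over {a,b'} except the one sending both to 0; S_{{a',b'}} = all sections over {a',b'} except the one sending both to 1. Then there is no nonempty set T of global assignments X → {0,1} such that for each of the four contexts C, the set {t|C : t ∈ T} equals S_C (i.e. the possibilistic Hardy model has no global section over the boolean semiring). -/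
open Finset

/-- The supports of the possibilistic Hardy model.  Alice's measurements are `a = 0`, `a' = 1`
and Bob's are `b = 0`, `b' = 1` (indices `i j : Fin 2`); outcomes `0, 1` are `false, true`.
Context `{a, b}` has full support; contexts `{a', b}` and `{a, b'}` exclude the joint outcome
`(0, 0)`; context `{a', b'}` excludes the joint outcome `(1, 1)`. -/
def hardySupport (i j : Fin 2) : Set (Bool × Bool) :=
  if i = 0 ∧ j = 0 then Set.univ
  else if i = 1 ∧ j = 1 then {p | p ≠ (true, true)}
  else {p | p ≠ (false, false)}

/-- The possibilistic Hardy model has no global section over the boolean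
semiring: there is no nonempty set `T` of global assignments whose set of restrictions to each
context equals the corresponding Hardy support. -/
theorem hardy_model_has_no_boolean_global_section :
    ¬ ∃ T : Set ((Fin 2 → Bool) × (Fin 2 → Bool)), T.Nonempty ∧
      ∀ i j : Fin 2,
        {p : Bool × Bool | ∃ g ∈ T, g.1 i = p.1 ∧ g.2 j = p.2} = hardySupport i j := by
  rintro ⟨T, -, h⟩
  have h00 : ((false, false) : Bool × Bool) ∈ hardySupport 0 0 := by simp [hardySupport]
  rw [← h 0 0] at h00
  obtain ⟨g, hg, ha, hb⟩ := h00
  have key : ∀ i j : Fin 2, (g.1 i, g.2 j) ∈ hardySupport i j := by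
    intro i j
    rw [← h i j]
    exact ⟨g, hg, rfl, rfl⟩
  have h10 := key 1 0
  have h01 := key 0 1
  have h11 := key 1 1
  simp only at ha hb
  simp [hardySupport, ha, hb] at h10 h01 h11
  simp [h10, h01] at h11
end

section
/- For every n ≥ 3, the n-partite GHZ model is strongly contextual; concretely: there is no pair of functions x, y : {1,...,n} → {0,1} such that for every subset S ⊆ {1,...,n}, writing N(S) := Σ_{i∈S} y(i) + Σ_{i∉S} x(i), it holds that N(S) is even whenever |S| ≡ 0 (mod 4), and N(S) is odd whenever |S| ≡ 2 (mod 4). -/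
open Finset

/-- For every `n ≥ 3` the `n`-partite GHZ model is strongly contextual:
there is no pair of outcome assignments `x, y : Fin n → Fin 2` (for the `X_i` and `Y_i`
measurements) such that for every subset `S` of the parties, the number
`N(S) = ∑_{i ∈ S} y(i) + ∑_{i ∉ S} x(i)` is even whenever `|S| ≡ 0 (mod 4)` and odd whenever
`|S| ≡ 2 (mod 4)`. -/
theorem ghz_strongly_contextual (n : ℕ) (hn : 3 ≤ n) :
    ¬ ∃ x y : Fin n → Fin 2,
      ∀ S : Finset (Fin n),
        (S.card % 4 = 0 → Even ((∑ i ∈ S, (y i : ℕ)) + ∑ i ∈ Sᶜ, (x i : ℕ))) ∧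
        (S.card % 4 = 2 → Odd ((∑ i ∈ S, (y i : ℕ)) + ∑ i ∈ Sᶜ, (x i : ℕ))) := by
  rintro ⟨x, y, h⟩
  have h0 := (h ∅).1 (by simp)
  have key : ∀ a b : Fin n, a ≠ b →
      ((y a : ℕ) + (y b : ℕ) + (x a : ℕ) + (x b : ℕ)) % 2 = 1 := by
    intro a b hab
    have h1 := (h {a, b}).2 (by rw [Finset.card_pair hab])
    have h2 := Finset.sum_compl_add_sum ({a, b} : Finset (Fin n)) (fun i => (x i : ℕ))
    rw [Finset.sum_pair hab] at h1 h2
    simp only [Finset.sum_empty, Finset.compl_empty, zero_add] at h0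
    rw [Nat.even_iff] at h0
    rw [Nat.odd_iff] at h1
    omega
  have k1 := key ⟨0, by omega⟩ ⟨1, by omega⟩ (by simp)
  have k2 := key ⟨0, by omega⟩ ⟨2, by omega⟩ (by simp)
  have k3 := key ⟨1, by omega⟩ ⟨2, by omega⟩ (by simp)
  omega
end

section
/- Let e = (e_C)_{C∈M} be a compatible probabilistic model over a measurement cover M on a finite set X with finite outcome set O. Then e is strongly contextual (there is no global assignment s : X → O with s|C ∈ supp(e_C) for every C ∈ M) if and only if e is maximally contextual: for every λ with 0 < λ ≤ 1, there exist no compatible probabilistic models L and q over M such that L has a global section (an ℝ≥0-distribution d on O^X with d|C = L_C for all C) and e_C(s) = λ·L_C(s) + (1−λ)·q_C(s) for every C ∈ M and every section s over C. -/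
open Finset

theorem aux_exists_lam {ι : Type} (M : Finset ι) (f : ι → NNReal) (h : ∀ i ∈ M, f i ≠ 0) :
    ∃ lam : NNReal, 0 < lam ∧ lam ≤ 1/2 ∧ ∀ i ∈ M, lam ≤ f i := by
  classical
  induction M using Finset.induction_on with
  | empty => exact ⟨1/2, by positivity, le_rfl, by simp⟩
  | insert a M ha ih =>
    obtain ⟨l, h0, h1, h2⟩ := ih (fun i hi => h i (mem_insert_of_mem hi))
    refine ⟨min l (f a), lt_min h0 (pos_iff_ne_zero.2 (h a (mem_insert_self _ _))),
      (min_le_left _ _).trans h1, ?_⟩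
    intro i hi
    rcases mem_insert.1 hi with rfl | hi
    · exact min_le_right _ _
    · exact (min_le_left _ _).trans (h2 i hi)

theorem aux_marg_delta {X O : Type} [DecidableEq X] [Fintype O] [DecidableEq O]
    {U V : Finset X} (h : V ⊆ U) (t : X → O) :
    marg h (fun s => if resGlob t U = s then (1 : NNReal) else 0) =
      fun s => if resGlob t V = s then (1 : NNReal) else 0 := by
  funext v
  have : resSec h (resGlob t U) = resGlob t V := rfl
  simp [marg, Finset.sum_ite_eq, this]

theorem aux_marg_lin {X O : Type} [DecidableEq X] [Fintype O] [DecidableEq O]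
    {U V : Finset X} (h : V ⊆ U) (a b : NNReal) (f g k : ({x // x ∈ U} → O) → NNReal)
    (hk : ∀ s, k s = a * f s + b * g s) (v : {x // x ∈ V} → O) :
    marg h k v = a * marg h f v + b * marg h g v := by
  simp only [marg, hk, Finset.sum_add_distrib, Finset.mul_sum]

/-- A compatible probabilistic model `e` over a measurement cover is strongly
contextual (no global assignment restricts into the support of every context) if and only if it
is maximally contextual: for no `0 < λ ≤ 1` does `e` admit a convex decomposition
`e = λ·L + (1-λ)·q` with `L` a compatible probabilistic model possessing a global section and
`q` a compatible probabilistic model. -/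
theorem strongly_contextual_iff_maximally_contextual
    {X O : Type} [Fintype X] [DecidableEq X] [Fintype O] [DecidableEq O]
    (MM : Finset (Finset X))
    (hcov : ∀ x : X, ∃ C ∈ MM, x ∈ C)
    (hanti : ∀ C ∈ MM, ∀ C' ∈ MM, C ⊆ C' → C = C')
    (e : (C : Finset X) → ({x // x ∈ C} → O) → NNReal)
    (hdist : ∀ C ∈ MM, ∑ s, e C s = 1)
    (hcompat : ∀ C ∈ MM, ∀ C' ∈ MM,
      marg (show C ∩ C' ⊆ C from inter_subset_left) (e C) =
      marg (show C ∩ C' ⊆ C' from inter_subset_right) (e C')) :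
    (¬ ∃ s : X → O, ∀ C ∈ MM, e C (resGlob s C) ≠ 0) ↔
    (∀ lam : NNReal, 0 < lam → lam ≤ 1 →
      ¬ ∃ L q : (C : Finset X) → ({x // x ∈ C} → O) → NNReal,
        (∀ C ∈ MM, ∑ s, L C s = 1) ∧
        (∀ C ∈ MM, ∀ C' ∈ MM,
          marg (show C ∩ C' ⊆ C from inter_subset_left) (L C) =
          marg (show C ∩ C' ⊆ C' from inter_subset_right) (L C')) ∧
        (∀ C ∈ MM, ∑ s, q C s = 1) ∧
        (∀ C ∈ MM, ∀ C' ∈ MM,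
          marg (show C ∩ C' ⊆ C from inter_subset_left) (q C) =
          marg (show C ∩ C' ⊆ C' from inter_subset_right) (q C')) ∧
        (∃ d : (X → O) → NNReal, (∑ t, d t = 1) ∧
          ∀ C ∈ MM, ∀ s : {x // x ∈ C} → O, globMarg d C s = L C s) ∧
        (∀ C ∈ MM, ∀ s : {x // x ∈ C} → O,
          e C s = lam * L C s + (1 - lam) * q C s)) := by
  constructor
  · rintro hs lam h0 h1 ⟨L, q, -, -, -, -, ⟨d, hd, hL⟩, he⟩
    apply hs
    obtain ⟨t, -, ht⟩ : ∃ t ∈ (univ : Finset (X → O)), d t ≠ 0 := by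
      apply Finset.exists_ne_zero_of_sum_ne_zero
      rw [hd]; exact one_ne_zero
    refine ⟨t, fun C hC => ?_⟩
    have hle : d t ≤ L C (resGlob t C) := by
      rw [← hL C hC]
      exact Finset.single_le_sum (f := d) (fun _ _ => zero_le) (by simp)
    have hpos : 0 < L C (resGlob t C) := lt_of_lt_of_le (pos_iff_ne_zero.2 ht) hle
    rw [he C hC]
    have := mul_pos h0 hpos
    exact (add_pos_of_pos_of_nonneg this zero_le).ne'
  · rintro hm ⟨t, ht⟩
    obtain ⟨lam, h0, h1, h2⟩ := aux_exists_lam MM (fun C => e C (resGlob t C)) ht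
    have hlt : lam < 1 := lt_of_le_of_lt h1 (by
      rw [← NNReal.coe_lt_coe]; norm_num)
    have hne : 1 - lam ≠ 0 := (tsub_pos_of_lt hlt).ne'
    let L : (C : Finset X) → ({x // x ∈ C} → O) → NNReal :=
      fun C s => if resGlob t C = s then 1 else 0
    let q : (C : Finset X) → ({x // x ∈ C} → O) → NNReal :=
      fun C s => (e C s - lam * L C s) / (1 - lam)
    have he : ∀ C ∈ MM, ∀ s : {x // x ∈ C} → O,
        e C s = lam * L C s + (1 - lam) * q C s := by
      intro C hC s
      have hle : lam * L C s ≤ e C s := by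
        by_cases h : resGlob t C = s
        · subst h; simpa [L] using h2 C hC
        · simp [L, h]
      simp only [q]
      rw [mul_div_cancel₀ _ hne, add_tsub_cancel_of_le hle]
    have hLs : ∀ C ∈ MM, ∑ s, L C s = 1 := by
      intro C hC
      simp [L]
    have hLc : ∀ C ∈ MM, ∀ C' ∈ MM,
          marg (show C ∩ C' ⊆ C from inter_subset_left) (L C) =
          marg (show C ∩ C' ⊆ C' from inter_subset_right) (L C') := by
      intro C _ C' _
      exact (aux_marg_delta _ t).trans (aux_marg_delta _ t).symm
    refine hm lam h0 hlt.le ⟨L, q, hLs, hLc, ?_, ?_, ⟨fun u => if t = u then 1 else 0, ?_, ?_⟩, he⟩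
    · intro C hC
      have h := hdist C hC
      simp only [he C hC] at h
      rw [Finset.sum_add_distrib, ← Finset.mul_sum, ← Finset.mul_sum, hLs C hC, mul_one] at h
      have h' : lam + (1 - lam) * ∑ s, q C s = lam + (1 - lam) * 1 := by
        rw [h, mul_one, add_tsub_cancel_of_le hlt.le]
      exact mul_left_cancel₀ hne (add_left_cancel h')
    · intro C hC C' hC'
      funext v
      have h := congrFun (hcompat C hC C' hC') v
      rw [aux_marg_lin _ _ _ _ _ _ (he C hC), aux_marg_lin _ _ _ _ _ _ (he C' hC'),
        hLc C hC C' hC'] at h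
      exact mul_left_cancel₀ hne (add_left_cancel h)
    · simp
    · intro C hC s
      simp [globMarg, L, Finset.sum_ite_eq]
end

section
/- Let M be a measurement cover on a finite set X. Suppose there exists a function s : X → {0,1} such that every context C ∈ M contains exactly one measurement m with s(m) = 1. Then every common divisor of the cardinalities |M(m)| for m ∈ X, where M(m) := {C ∈ M : m ∈ C}, divides |M|. -/
open Finset

/-- If some 0/1-assignment `s` on the measurements satisfies the
Kochen–Specker formula for a measurement cover `M` (every context contains exactly one
measurement sent to 1), then every common divisor of the numbers `|M(m)|` (the number of
contexts containing `m`), for `m ∈ X`, divides `|M|`. -/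
theorem ks_global_section_divisibility
    {X : Type} [Fintype X] [DecidableEq X]
    (MM : Finset (Finset X))
    (hcov : ∀ x : X, ∃ C ∈ MM, x ∈ C)
    (hanti : ∀ C ∈ MM, ∀ C' ∈ MM, C ⊆ C' → C = C')
    (s : X → Bool)
    (hs : ∀ C ∈ MM, (C.filter (fun m => s m = true)).card = 1) :
    ∀ d : ℕ, (∀ m : X, d ∣ (MM.filter (fun C => m ∈ C)).card) → d ∣ MM.card := by
  intro d hd
  have key : MM.card = ∑ m ∈ univ.filter (fun m => s m = true),
      (MM.filter (fun C => m ∈ C)).card := by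
    calc MM.card = ∑ C ∈ MM, (C.filter (fun m => s m = true)).card := by
          rw [Finset.sum_congr rfl hs]; simp
      _ = ∑ C ∈ MM, ∑ m ∈ univ.filter (fun m => s m = true), if m ∈ C then 1 else 0 := by
          refine Finset.sum_congr rfl fun C _ => ?_
          rw [← Finset.card_filter]
          congr 1
          ext m
          simp [and_comm]
      _ = _ := by
          rw [Finset.sum_comm]
          simp only [Finset.card_filter]
  rw [key]
  exact Finset.dvd_sum fun m _ => hd m
end

section
/- Let H = ℂ^n, let ρ be a positive semidefinite n×n complex matrix with trace 1, let O be a finite set of outcomes, and let C, C' be finite sets of measurements. For each measurement m ∈ C ∪ C' let (P_m^o)_{o∈O} be a family of orthogonal projection matrices with Σ_{o∈O} P_m^o = I, such that P_m^o and P_{m'}^{o'} commute for all outcomes o, o' whenever m ≠ m' both lie in C, and likewise whenever m ≠ m' both lie in C'. For a section s : U → O over a set U of measurements whose projections pairwise commute, let P_s := Π_{m∈U} P_m^{s(m)}, and define ρ_U(s) := Tr(ρ P_s). Then for every section s₀ : C ∩ C' → O: Σ_{s : C→O, s|C∩C' = s₀} ρ_C(s) = Σ_{s' : C'→O, s'|C∩C'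 = s₀} ρ_{C'}(s') (and both sums equal ρ_{C∩C'}(s₀)). -/
open Finset
open scoped ComplexOrder

/-- The projector `P_s` associated with a section `s` over a set `U` of measurements: the
product `∏_{m ∈ U} P_m^{s(m)}` (taken in increasing order of `m`; when the projections
pairwise commute this is the product in any order). -/
noncomputable def sectionProj {d : ℕ} {Meas O : Type} [LinearOrder Meas]
    (P : Meas → O → Matrix (Fin d) (Fin d) ℂ) (U : Finset Meas)
    (s : {x // x ∈ U} → O) : Matrix (Fin d) (Fin d) ℂ :=
  ((U.attach.sort (· ≤ ·)).map (fun m => P m.1 (s m))).prod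
lemma aux_distrib {ι O A : Type} [Fintype ι] [DecidableEq ι] [DecidableEq O] [Ring A]
    (l : List ι) (nd : l.Nodup) (hl : ∀ x, x ∈ l) (T : ι → Finset O) (f : ι → O → A) :
    ∑ s ∈ Fintype.piFinset T, (l.map (fun i => f i (s i))).prod
      = (l.map (fun i => ∑ o ∈ T i, f i o)).prod := by
  let e := nd.getEquivOfForallMemList l hl
  let F := (MultilinearMap.mkPiAlgebraFin ℤ l.length A).domDomCongr e
  have hF : ∀ g : ι → A, F g = (l.map g).prod := by
    intro g
    have : F g = (List.ofFn (fun i => g (l.get i))).prod := rfl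
    rw [this, List.ofFn_comp' , List.ofFn_get]
  rw [← hF, MultilinearMap.map_sum_finset]
  simp only [hF]

lemma aux_attach {M A : Type} [LinearOrder M] [Monoid A] (U : Finset M) (g : M → A) :
    ((U.attach.sort (· ≤ ·)).map (fun m => g m.1)).prod = ((U.sort (· ≤ ·)).map g).prod := by
  have : (U.attach.sort (· ≤ ·)).map (fun m => m.1) = U.sort (· ≤ ·) := by
    apply List.Pairwise.eq_of_mem_iff (r := (· < ·))
    · exact List.Pairwise.map _ (fun a b h => h) U.attach.sortedLT_sort.pairwise
    · exact U.sortedLT_sort.pairwise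
    · intro a; simp
  rw [← this, List.map_map]; rfl

lemma aux_drop {M A : Type} [Monoid A] (l : List M) (p : M → Prop) [DecidablePred p]
    (g : M → A) (h : ∀ m, ¬ p m → g m = 1) :
    ((l.filter (fun m => decide (p m))).map g).prod = (l.map g).prod := by
  induction l with
  | nil => rfl
  | cons a l ih =>
    by_cases hp : p a
    · simp [hp, ih]
    · simp [hp, ih, h a hp]

lemma aux_sub {M A : Type} [LinearOrder M] [Monoid A] (U V : Finset M) (hVU : V ⊆ U) (g : M → A)
    (h : ∀ m, m ∉ V → g m = 1) :
    ((U.sort (· ≤ ·)).map g).prod = ((V.sort (· ≤ ·)).map g).prod := by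
  rw [← aux_drop _ (· ∈ V) g h]
  congr 2
  apply List.Pairwise.eq_of_mem_iff (r := (· < ·))
  · exact List.Pairwise.filter _ U.sortedLT_sort.pairwise
  · exact V.sortedLT_sort.pairwise
  · intro a; simp only [List.mem_filter, mem_sort, decide_eq_true_eq]
    exact ⟨fun h => h.2, fun h => ⟨hVU h, h⟩⟩

lemma aux_marg {d : ℕ} {Meas O : Type} [LinearOrder Meas] [Fintype O] [DecidableEq O]
    (P : Meas → O → Matrix (Fin d) (Fin d) ℂ) (U V : Finset Meas) (hVU : V ⊆ U)
    (hsum : ∀ m ∈ U, ∑ o, P m o = 1) (s₀ : {x // x ∈ V} → O) :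
    ∑ s ∈ univ.filter (fun s : {x // x ∈ U} → O => resSec hVU s = s₀), sectionProj P U s
      = sectionProj P V s₀ := by
  let T : {x // x ∈ U} → Finset O := fun m => if h : m.1 ∈ V then {s₀ ⟨m.1, h⟩} else univ
  let g : Meas → Matrix (Fin d) (Fin d) ℂ := fun m => if h : m ∈ V then P m (s₀ ⟨m, h⟩) else 1
  have hT : univ.filter (fun s : {x // x ∈ U} → O => resSec hVU s = s₀) = Fintype.piFinset T := by
    ext s
    simp only [mem_filter, mem_univ, true_and, Fintype.mem_piFinset, T]
    constructor
    · rintro rfl m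
      by_cases h : m.1 ∈ V <;> simp [h, resSec]
    · intro H
      funext v
      have := H ⟨v.1, hVU v.2⟩
      simpa [resSec] using this
  rw [hT]
  unfold sectionProj
  rw [aux_distrib _ (Finset.sort_nodup _ _) (by simp) T (fun m o => P m.1 o)]
  have h1 : (fun i : {x // x ∈ U} => ∑ o ∈ T i, P i.1 o) = fun i => g i.1 := by
    funext i
    by_cases h : i.1 ∈ V
    · simp [T, g, h]
    · simp [T, g, h, hsum i.1 i.2]
  have h2 : (fun m : {x // x ∈ V} => P m.1 (s₀ m)) = fun i => g i.1 := by
    funext i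
    simp [g]
  rw [h1, h2, aux_attach, aux_attach]
  exact aux_sub U V hVU g (fun m hm => by simp [g, hm])

/-- **Generalized no-signalling.** Let `ρ` be a state on `ℂ^d` and, for each
measurement `m` in `C ∪ C'`, let `(P m o)_{o ∈ O}` be orthogonal projections summing to the
identity, with projections of distinct measurements within `C` commuting, and likewise within
`C'`.  Then for every section `s₀` over `C ∩ C'`, the marginal over sections of `C` of the Born
probabilities `ρ_C(s) = Tr(ρ P_s)` agrees with the marginal over sections of `C'`, and both
equal `ρ_{C∩C'}(s₀)`. -/
theorem generalized_no_signalling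
    {d : ℕ} {Meas O : Type} [LinearOrder Meas] [Fintype O] [DecidableEq O]
    (ρ : Matrix (Fin d) (Fin d) ℂ) (hpsd : ρ.PosSemidef) (htr : ρ.trace = 1)
    (C C' : Finset Meas)
    (P : Meas → O → Matrix (Fin d) (Fin d) ℂ)
    (hherm : ∀ m ∈ C ∪ C', ∀ o, (P m o).IsHermitian)
    (hidem : ∀ m ∈ C ∪ C', ∀ o, P m o * P m o = P m o)
    (hsum : ∀ m ∈ C ∪ C', ∑ o, P m o = 1)
    (hcommC : ∀ m ∈ C, ∀ m' ∈ C, m ≠ m' → ∀ o o', Commute (P m o) (P m' o'))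
    (hcommC' : ∀ m ∈ C', ∀ m' ∈ C', m ≠ m' → ∀ o o', Commute (P m o) (P m' o')) :
    ∀ s₀ : {x // x ∈ C ∩ C'} → O,
      (∑ s ∈ univ.filter (fun s : {x // x ∈ C} → O =>
          resSec (show C ∩ C' ⊆ C from inter_subset_left) s = s₀),
        (ρ * sectionProj P C s).trace)
        = (∑ s' ∈ univ.filter (fun s' : {x // x ∈ C'} → O =>
            resSec (show C ∩ C' ⊆ C' from inter_subset_right) s' = s₀),
          (ρ * sectionProj P C' s').trace) ∧
      (∑ s ∈ univ.filter (fun s : {x // x ∈ C} → O =>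
          resSec (show C ∩ C' ⊆ C from inter_subset_left) s = s₀),
        (ρ * sectionProj P C s).trace)
        = (ρ * sectionProj P (C ∩ C') s₀).trace := by
  intro s₀
  have h1 := aux_marg P C (C ∩ C') inter_subset_left
    (fun m hm => hsum m (mem_union_left _ hm)) s₀
  have h2 := aux_marg P C' (C ∩ C') inter_subset_right
    (fun m hm => hsum m (mem_union_right _ hm)) s₀
  simp only [← Matrix.trace_sum, ← Finset.mul_sum]
  rw [h1, h2]
  exact ⟨rfl, rfl⟩
end
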